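/- (Certificates for low-dimensionality of spectrahedra.) For any linear pencil L of size m in n variables, the following are equivalent: (i) the spectrahedron S_L has empty interior in ℝⁿ; (ii) there exist a nonzero polynomial ℓ ∈ ℝ[X₁,…,Xₙ] of degree at most 1 and a quadratic sos-matrix S ∈ ℝ[X₁,…,Xₙ]^(m×m) such that −ℓ² = tr(L·S). -/

import Mathlib

open MvPolynomial Matrix

/-- The linear pencil `L = A 0 + X 1 * A 1 + ... + X n * A n` as a symmetric matrix
with entries in the polynomial ring `ℝ[X 1, ..., X n]`. -/
noncomputable def pencilPoly {n m : ℕ} (A : Fin (n+1) → Matrix (Fin m) (Fin m) ℝ) :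
    Matrix (Fin m) (Fin m) (MvPolynomial (Fin n) ℝ) :=
  fun a b => MvPolynomial.C (A 0 a b) + ∑ i : Fin n, MvPolynomial.X i * MvPolynomial.C (A i.succ a b)

/-- Evaluation of the pencil at a point `x ∈ ℝⁿ`. -/
def pencilEval {n m : ℕ} (A : Fin (n+1) → Matrix (Fin m) (Fin m) ℝ) (x : Fin n → ℝ) :
    Matrix (Fin m) (Fin m) ℝ :=
  A 0 + ∑ i : Fin n, x i • A i.succ

/-- The spectrahedron `S_L = {x ∈ ℝⁿ ∣ L(x) ⪰ 0}`. -/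
def specSet {n m : ℕ} (A : Fin (n+1) → Matrix (Fin m) (Fin m) ℝ) : Set (Fin n → ℝ) :=
  {x | (pencilEval A x).PosSemidef}

/-- `vᵀ L v` for a vector `v` of polynomials. -/
noncomputable def vLv {n m : ℕ} (A : Fin (n+1) → Matrix (Fin m) (Fin m) ℝ)
    (v : Fin m → MvPolynomial (Fin n) ℝ) : MvPolynomial (Fin n) ℝ :=
  ∑ a : Fin m, ∑ b : Fin m, v a * pencilPoly A a b * v b

/-- Membership in the quadratic module `M_L` associated to the pencil `L`:
`p = s + Σⱼ vⱼᵀ L vⱼ` with `s` a sum of squares. -/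
def memQM {n m : ℕ} (A : Fin (n+1) → Matrix (Fin m) (Fin m) ℝ)
    (p : MvPolynomial (Fin n) ℝ) : Prop :=
  ∃ (k r : ℕ) (q : Fin k → MvPolynomial (Fin n) ℝ)
    (v : Fin r → Fin m → MvPolynomial (Fin n) ℝ),
    p = ∑ i, (q i)^2 + ∑ j, vLv A (v j)

/-- An sos-matrix: a matrix polynomial of the form `Pᵀ P`. -/
def IsSosMatrix {n m : ℕ} (S : Matrix (Fin m) (Fin m) (MvPolynomial (Fin n) ℝ)) : Prop :=
  ∃ (s : ℕ) (P : Matrix (Fin s) (Fin m) (MvPolynomial (Fin n) ℝ)), S = Pᵀ * P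

/-!
Let `K` be the common kernel of the coefficients `A k` and `W` a complement of `K`. By a
Gordan-type alternative for quadratic maps, either some linear functional is positive on all
values of `(w, t) ↦ (wᵀ A k w)_k + t² e₀` at `(w, t) ≠ 0` in `W × ℝ`, and then it yields a point `x`
with `L(x)` positive definite on `W`, a condition that is open and implies `L ⪰ 0`; or there is a
matrix `U` with rows in `W` such that `tr (U L Uᵀ)` is a constant `-μ`, where `μ > 0`, or
`μ = 0` and `U ≠ 0`. If `μ > 0`, then `UᵀU` is a certificate with `ℓ = √μ`. If `μ = 0`,
some entry `ℓ = (U L)_{ib}` is nonzero because `W ∩ K = 0`, and the isotropic `U` can be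
perturbed: with `E` the matrix unit at `(i, b)` and `2 p = -(L_{bb} + 1)`, the matrix
`P = p U + ℓ E` satisfies `tr (P L Pᵀ) = 2 p ℓ² + ℓ² L_{bb} = -ℓ²`.
-/

section QuadraticMaps

variable {E V : Type*} [AddCommGroup E] [Module ℝ E] [TopologicalSpace E]
  [IsTopologicalAddGroup E] [ContinuousSMul ℝ E] [FiniteDimensional ℝ E]
  [NormedAddCommGroup V] [NormedSpace ℝ V]

theorem isCompact_convexHull {K : Set E} (hK : IsCompact K) : IsCompact (convexHull ℝ K) := by
  let combinations (j : ℕ) : Set E :=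
    (fun p : (Fin j → ℝ) × (Fin j → E) => ∑ i, p.1 i • p.2 i) ''
      (stdSimplex ℝ (Fin j) ×ˢ Set.univ.pi fun _ => K)
  have hcompact (j : ℕ) : IsCompact (combinations j) :=
    ((isCompact_stdSimplex ℝ (Fin j)).prod (isCompact_univ_pi fun _ => hK)).image (by fun_prop)
  have hunion : convexHull ℝ K =
      ⋃ j ∈ Finset.range (Module.finrank ℝ E + 2), combinations j := by
    refine Set.Subset.antisymm (fun x hx => ?_) (Set.iUnion₂_subset fun j _ => ?_)
    · obtain ⟨ι, _, z, w, hz, hind, hw, hw1, rfl⟩ := eq_pos_convex_span_of_mem_convexHull hx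
      let e := Fintype.equivFin ι
      have hcard : Fintype.card ι < Module.finrank ℝ E + 2 := by
        have := hind.card_le_finrank_succ
        have := Submodule.finrank_le (vectorSpan ℝ (Set.range z))
        omega
      refine Set.mem_iUnion₂.mpr ⟨_, Finset.mem_range.mpr hcard, (w ∘ e.symm, z ∘ e.symm),
        ⟨⟨fun i => (hw _).le, ?_⟩, fun i _ => hz ⟨_, rfl⟩⟩, ?_⟩
      · exact (e.symm.sum_comp w).trans hw1
      · exact e.symm.sum_comp fun i => w i • z i
    · rintro _ ⟨⟨w, z⟩, ⟨⟨hw, hw1⟩, hz⟩, rfl⟩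
      exact mem_convexHull_of_exists_fintype w z hw hw1 (fun i => hz i trivial) rfl
  rw [hunion]
  exact Finset.isCompact_biUnion _ fun j _ => hcompact j

theorem exists_forall_pos_of_zero_notMem_convexHull [T2Space E] [LocallyConvexSpace ℝ E]
    {K : Set E} (hK : IsCompact K) (h0 : (0 : E) ∉ convexHull ℝ K) :
    ∃ f : StrongDual ℝ E, ∀ x ∈ K, 0 < f x := by
  obtain ⟨f, u, hu, hf⟩ := geometric_hahn_banach_point_closed (convex_convexHull ℝ K)
    (isCompact_convexHull hK).isClosed h0
  rw [map_zero] at hu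
  exact ⟨f, fun x hx => hu.trans (hf x (subset_convexHull ℝ K hx))⟩

theorem pos_of_forall_mem_sphere_pos {q : V → ℝ} (hq : ∀ (t : ℝ) v, q (t • v) = t ^ 2 * q v)
    (hpos : ∀ v ∈ Metric.sphere (0 : V) 1, 0 < q v) {v : V} (hv : v ≠ 0) : 0 < q v := by
  have hnorm : 0 < ‖v‖ := norm_pos_iff.mpr hv
  have h : 0 < q (‖v‖⁻¹ • v) := hpos _ (by simp [norm_smul, hnorm.ne'])
  rw [hq] at h
  exact pos_of_mul_pos_right h (sq_nonneg _)

variable [FiniteDimensional ℝ V]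

theorem isOpen_setOf_forall_ne_zero_pos {X : Type*} [TopologicalSpace X] {q : X → V → ℝ}
    (hcont : Continuous fun p : X × V => q p.1 p.2)
    (hq : ∀ x (t : ℝ) v, q x (t • v) = t ^ 2 * q x v) :
    IsOpen {x | ∀ v ≠ 0, 0 < q x v} := by
  refine isOpen_iff_mem_nhds.mpr fun x hx => ?_
  have hsphere : ∀ᶠ y in nhds x, ∀ v ∈ Metric.sphere (0 : V) 1, 0 < q y v :=
    (isCompact_sphere 0 1).eventually_forall_of_forall_eventually fun v hv =>
      hcont.continuousAt.eventually
        (lt_mem_nhds (hx v (ne_zero_of_mem_unit_sphere ⟨v, hv⟩)))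
  exact hsphere.mono fun y hy v hv => pos_of_forall_mem_sphere_pos (hq y) hy hv

/-- This is Gordan's theorem of the alternative, for a quadratic map instead of a matrix. -/
theorem exists_forall_ne_zero_pos_or_exists_sum_eq_zero [T2Space E] [LocallyConvexSpace ℝ E]
    {φ : V → E} (hcont : Continuous φ) (hφ : ∀ (t : ℝ) v, φ (t • v) = t ^ 2 • φ v) :
    (∃ f : StrongDual ℝ E, ∀ v ≠ 0, 0 < f (φ v)) ∨
      ∃ (σ : Type) (_ : Fintype σ) (v : σ → V), v ≠ 0 ∧ ∑ i, φ (v i) = 0 := by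
  by_cases h0 : (0 : E) ∈ convexHull ℝ (φ '' Metric.sphere 0 1)
  · obtain ⟨σ, _, w, z, hw, hw1, hz, hsum⟩ := mem_convexHull_iff_exists_fintype.mp h0
    choose v hv hφv using hz
    refine .inr ⟨σ, inferInstance, fun i => √(w i) • v i, fun h => ?_, ?_⟩
    · have hw0 (i : σ) : w i = 0 := by
        have hi : √(w i) • v i = 0 := congrFun h i
        have hvi : v i ≠ 0 := ne_zero_of_mem_unit_sphere ⟨v i, hv i⟩
        exact (Real.sqrt_eq_zero (hw i)).mp ((smul_eq_zero.mp hi).resolve_right hvi)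
      simp [hw0] at hw1
    · simpa only [hφ, Real.sq_sqrt (hw _), hφv] using hsum
  · obtain ⟨f, hf⟩ := exists_forall_pos_of_zero_notMem_convexHull
      ((isCompact_sphere 0 1).image hcont) h0
    exact .inl ⟨f, fun v hv => pos_of_forall_mem_sphere_pos (q := f ∘ φ) (by simp [hφ])
      (fun v hv => hf _ ⟨v, hv, rfl⟩) hv⟩

end QuadraticMaps

section Matrices

variable {ι σ R : Type*} [Fintype ι]

theorem posSemidef_of_codisjoint_ker {M : Matrix ι ι ℝ} (hM : M.IsSymm)
    {W : Submodule ℝ (ι → ℝ)} (hW : Codisjoint W (LinearMap.ker M.mulVecLin))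
    (hpos : ∀ v ∈ W, 0 ≤ v ⬝ᵥ M *ᵥ v) : M.PosSemidef := by
  refine .of_dotProduct_mulVec_nonneg (isHermitian_iff_isSymm.mpr hM) fun v => ?_
  obtain ⟨w, k, hw, hk, rfl⟩ := Submodule.codisjoint_iff_exists_add_eq.mp hW v
  have hk : M *ᵥ k = 0 := hk
  have hkw : k ⬝ᵥ M *ᵥ w = 0 := by
    rw [dotProduct_mulVec, ← mulVec_transpose, hM.eq, hk, zero_dotProduct]
  simpa [mulVec_add, hk, hkw] using hpos w hw

theorem exists_mul_ne_zero_of_disjoint_ker [CommSemiring R] {κ : Type*} {A : κ → Matrix ι ι R}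
    (hsymm : ∀ k, (A k).IsSymm) {W : Submodule R (ι → R)}
    (hW : Disjoint W (⨅ k, LinearMap.ker (A k).mulVecLin)) {U : Matrix σ ι R}
    (hUW : ∀ i, U i ∈ W) (hU : U ≠ 0) : ∃ k, U * A k ≠ 0 := by
  contrapose! hU
  have hker (i : σ) : U i ∈ ⨅ k, LinearMap.ker (A k).mulVecLin := by
    refine Submodule.mem_iInf _ |>.mpr fun k => ?_
    rw [LinearMap.mem_ker, mulVecLin_apply, ← vecMul_transpose, (hsymm k).eq]
    exact congrFun (hU k) i
  exact funext fun i => Submodule.disjoint_def.mp hW _ (hUW i) (hker i)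

variable [Fintype σ]

theorem trace_mul_mul_transpose_eq_sum [NonUnitalSemiring R] (U : Matrix σ ι R)
    (M : Matrix ι ι R) :
    (U * M * Uᵀ).trace = ∑ i, U i ⬝ᵥ M *ᵥ U i :=
  Finset.sum_congr rfl fun i _ => by
    rw [dotProduct_mulVec]
    rfl

theorem trace_smul_add_smul_of_isotropic [CommRing R] {L : Matrix ι ι R} (hL : L.IsSymm)
    {U W : Matrix σ ι R} (hU : (U * L * Uᵀ).trace = 0) {p ℓ : R}
    (hℓ : (U * L * Wᵀ).trace = ℓ) (hp : 2 * p + (W * L * Wᵀ).trace = -1) :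
    ((p • U + ℓ • W) * L * (p • U + ℓ • W)ᵀ).trace = -ℓ ^ 2 := by
  have hℓ' : (W * L * Uᵀ).trace = ℓ := by
    rw [← trace_transpose, transpose_mul, transpose_mul, transpose_transpose, hL.eq,
      ← Matrix.mul_assoc, hℓ]
  simp only [transpose_add, transpose_smul, Matrix.add_mul, Matrix.mul_add, Matrix.smul_mul,
    Matrix.mul_smul, trace_add, trace_smul, smul_eq_mul, hU, hℓ, hℓ']
  linear_combination ℓ ^ 2 * hp

end Matrices

section Polynomials

theorem totalDegree_transpose_mul_self_le {ι κ τ R : Type*} [Fintype κ] [CommSemiring R]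
    {P : Matrix κ ι (MvPolynomial τ R)} {d : ℕ} (hP : ∀ i a, (P i a).totalDegree ≤ d) (a b : ι) :
    ((Pᵀ * P) a b).totalDegree ≤ 2 * d := by
  rw [mul_apply, two_mul]
  exact totalDegree_finsetSum_le fun i _ =>
    (totalDegree_mul _ _).trans (add_le_add (hP i a) (hP i b))

theorem eq_zero_of_eval_eq_zero_of_interior_nonempty {τ : Type*} [Finite τ]
    {p : MvPolynomial τ ℝ} {s : Set (τ → ℝ)} (hs : (interior s).Nonempty)
    (hp : ∀ x ∈ s, eval x p = 0) : p = 0 := by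
  cases nonempty_fintype τ
  obtain ⟨x, hx⟩ := hs
  obtain ⟨ε, hε, hball⟩ := Metric.mem_nhds_iff.mp (mem_interior_iff_mem_nhds.mp hx)
  rw [ball_pi x hε] at hball
  refine MvPolynomial.funext_set (fun i => Metric.ball (x i) ε) (fun i => ?_) fun y hy => ?_
  · rw [Real.ball_eq_Ioo]
    exact Set.Ioo_infinite (by linarith)
  · rw [hp y (hball hy), map_zero]

variable {n : ℕ} {R : Type*} [CommRing R]

/-- The affine polynomial `c 0 + X 1 * c 1 + ... + X n * c n`, as a linear function of the vector
`c` of its coefficients. -/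
noncomputable def affinePoly : (Fin (n + 1) → R) →ₗ[R] MvPolynomial (Fin n) R :=
  Fintype.linearCombination R (Fin.cons 1 X)

theorem affinePoly_apply (c : Fin (n + 1) → R) :
    affinePoly c = C (c 0) + ∑ i : Fin n, X i * C (c i.succ) := by
  simp [affinePoly, Fintype.linearCombination_apply, Fin.sum_univ_succ, smul_eq_C_mul, mul_comm]

theorem affinePoly_single_zero (r : R) : affinePoly (Pi.single 0 r : Fin (n + 1) → R) = C r := by
  simp [affinePoly_apply]

theorem affinePoly_injective : Function.Injective (affinePoly (n := n) (R := R)) := by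
  intro c d h
  have h0 : c 0 = d 0 := by simpa [affinePoly_apply] using congrArg (eval 0) h
  refine funext (Fin.cases h0 fun i => ?_)
  simpa [affinePoly_apply, h0, Pi.single_apply] using congrArg (eval (Pi.single i 1)) h

theorem totalDegree_affinePoly_le (c : Fin (n + 1) → R) : (affinePoly c).totalDegree ≤ 1 := by
  cases subsingleton_or_nontrivial R
  · simp [Subsingleton.elim (affinePoly c) 0]
  rw [affinePoly_apply]
  refine (totalDegree_add _ _).trans (max_le (by simp) (totalDegree_finsetSum_le fun i _ => ?_))
  exact (totalDegree_mul _ _).trans (by simp)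

theorem C_mul_affinePoly (r : R) (c : Fin (n + 1) → R) :
    C r * affinePoly c = affinePoly (r • c) := by
  rw [map_smul, smul_eq_C_mul]

end Polynomials

section Pencils

variable {n m : ℕ} {A : Fin (n + 1) → Matrix (Fin m) (Fin m) ℝ} {σ : Type*}

theorem isSymm_pencilPoly (hsymm : ∀ k, (A k).IsSymm) : (pencilPoly A).IsSymm := by
  ext a b
  simp only [transpose_apply, pencilPoly, (hsymm _).apply]

theorem isSymm_pencilEval (hsymm : ∀ k, (A k).IsSymm) (x : Fin n → ℝ) :
    (pencilEval A x).IsSymm := by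
  simp [pencilEval, IsSymm, transpose_sum, (hsymm _).eq]

theorem map_eval_pencilPoly (x : Fin n → ℝ) : (pencilPoly A).map (eval x) = pencilEval A x := by
  ext a b
  simp [pencilPoly, pencilEval, Matrix.sum_apply]

theorem dotProduct_pencilEval_mulVec (x : Fin n → ℝ) (u v : Fin m → ℝ) :
    u ⬝ᵥ pencilEval A x *ᵥ v = u ⬝ᵥ A 0 *ᵥ v + ∑ i : Fin n, x i * (u ⬝ᵥ A i.succ *ᵥ v) := by
  simp [pencilEval, add_mulVec, Matrix.sum_mulVec, smul_mulVec, dotProduct_add, dotProduct_sum]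

theorem continuous_pencilEval : Continuous (pencilEval A) := by
  unfold pencilEval
  fun_prop

theorem pencilPoly_apply_eq_affinePoly (a b : Fin m) :
    pencilPoly A a b = affinePoly fun k => A k a b := by
  rw [affinePoly_apply, pencilPoly]

theorem map_C_mul_pencilPoly_apply (U : Matrix σ (Fin m) ℝ) (i : σ) (b : Fin m) :
    (U.map (C (σ := Fin n)) * pencilPoly A) i b =
      affinePoly fun k => (U * A k) i b := by
  simp only [mul_apply, map_apply, pencilPoly_apply_eq_affinePoly, C_mul_affinePoly, ← map_sum]
  congr 1
  ext k
  simp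

variable [Fintype σ]

theorem trace_map_C_mul_pencilPoly_mul_transpose (U : Matrix σ (Fin m) ℝ) :
    (U.map (C (σ := Fin n)) * pencilPoly A * (U.map (C (σ := Fin n)))ᵀ).trace =
      affinePoly fun k => (U * A k * Uᵀ).trace := by
  have hterm (i : σ) (b : Fin m) :
      (U.map (C (σ := Fin n)) * pencilPoly A) i b * C (U i b) =
        affinePoly (U i b • fun k => (U * A k) i b) := by
    rw [map_C_mul_pencilPoly_apply, mul_comm, C_mul_affinePoly]
  calc
    _ = ∑ i, ∑ b, affinePoly (U i b • fun k => (U * A k) i b) :=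
      Finset.sum_congr rfl fun i _ => Finset.sum_congr rfl fun b _ => hterm i b
    _ = affinePoly (∑ i, ∑ b, U i b • fun k => (U * A k) i b) := by simp only [map_sum]
    _ = affinePoly fun k => (U * A k * Uᵀ).trace := by
      congr 1
      funext k
      simp [Matrix.trace, mul_apply (M := U * A k), mul_comm]

theorem isSosMatrix_transpose_mul_self (P : Matrix σ (Fin m) (MvPolynomial (Fin n) ℝ)) :
    IsSosMatrix (Pᵀ * P) := by
  let e := Fintype.equivFin σ
  refine ⟨_, P.submatrix e.symm id, ?_⟩
  rw [transpose_submatrix, submatrix_mul_equiv, submatrix_id_id]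

/-- The certificate `-ℓ² = tr (L S)` for low-dimensionality of `S_L`, where `ℓ ≠ 0` is an affine
polynomial and `S` is a quadratic sos-matrix. -/
def HasLowdimCertificate (A : Fin (n + 1) → Matrix (Fin m) (Fin m) ℝ) : Prop :=
  ∃ ℓ : MvPolynomial (Fin n) ℝ, ℓ ≠ 0 ∧ ℓ.totalDegree ≤ 1 ∧
    ∃ S : Matrix (Fin m) (Fin m) (MvPolynomial (Fin n) ℝ),
      IsSosMatrix S ∧ (∀ a b, (S a b).totalDegree ≤ 2) ∧ -ℓ ^ 2 = (pencilPoly A * S).trace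

theorem hasLowdimCertificate_of_trace_eq {ℓ : MvPolynomial (Fin n) ℝ} (hℓ : ℓ ≠ 0)
    (hdeg : ℓ.totalDegree ≤ 1) {P : Matrix σ (Fin m) (MvPolynomial (Fin n) ℝ)}
    (hP : ∀ i a, (P i a).totalDegree ≤ 1) (h : (P * pencilPoly A * Pᵀ).trace = -ℓ ^ 2) :
    HasLowdimCertificate A :=
  ⟨ℓ, hℓ, hdeg, Pᵀ * P, isSosMatrix_transpose_mul_self P, totalDegree_transpose_mul_self_le hP, by
    rw [← h, trace_mul_cycle, ← Matrix.mul_assoc, trace_mul_cycle]⟩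

theorem hasLowdimCertificate_of_trace_eq_neg {U : Matrix σ (Fin m) ℝ} {μ : ℝ} (hμ : 0 < μ)
    (hU : ∀ k, (U * A k * Uᵀ).trace = (Pi.single 0 (-μ) : Fin (n + 1) → ℝ) k) :
    HasLowdimCertificate A := by
  refine hasLowdimCertificate_of_trace_eq (ℓ := C √μ) (P := U.map C) ?_ (by simp) (by simp) ?_
  · exact C_ne_zero.mpr (Real.sqrt_pos.mpr hμ).ne'
  · rw [trace_map_C_mul_pencilPoly_mul_transpose, funext hU, affinePoly_single_zero, ← C_pow,
      Real.sq_sqrt hμ.le, C_neg]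

theorem hasLowdimCertificate_of_isotropic (hsymm : ∀ k, (A k).IsSymm) {U : Matrix σ (Fin m) ℝ}
    (hU : ∀ k, (U * A k * Uᵀ).trace = 0) {k : Fin (n + 1)} (hne : U * A k ≠ 0) :
    HasLowdimCertificate A := by
  classical
  obtain ⟨i, b, hib⟩ : ∃ i b, (U * A k) i b ≠ 0 := by
    contrapose! hne
    exact Matrix.ext hne
  let ℓ : MvPolynomial (Fin n) ℝ := affinePoly fun k => (U * A k) i b
  let p : MvPolynomial (Fin n) ℝ := C (-1 / 2) * (pencilPoly A b b + 1)
  let V : Matrix σ (Fin m) (MvPolynomial (Fin n) ℝ) := U.map C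
  let W : Matrix σ (Fin m) (MvPolynomial (Fin n) ℝ) := Matrix.single i b 1
  have hℓ : ℓ ≠ 0 := (map_ne_zero_iff _ affinePoly_injective).mpr fun h => hib (congrFun h k)
  have hdegℓ : ℓ.totalDegree ≤ 1 := totalDegree_affinePoly_le _
  have hdegp : p.totalDegree ≤ 1 := by
    refine (totalDegree_mul _ _).trans ?_
    rw [totalDegree_C, zero_add, pencilPoly_apply_eq_affinePoly]
    exact (totalDegree_add _ _).trans (max_le (totalDegree_affinePoly_le _) (by simp))
  have hVV : (V * pencilPoly A * Vᵀ).trace = 0 := by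
    rw [trace_map_C_mul_pencilPoly_mul_transpose, funext hU]
    exact map_zero affinePoly
  have hVW : (V * pencilPoly A * Wᵀ).trace = ℓ := by
    rw [transpose_single, trace_mul_single]
    simp [V, ℓ, map_C_mul_pencilPoly_apply]
  have hWW : (W * pencilPoly A * Wᵀ).trace = pencilPoly A b b := by
    simp [W]
  have hp : 2 * p + (W * pencilPoly A * Wᵀ).trace = -1 := by
    have htwo : (2 : MvPolynomial (Fin n) ℝ) * C (-1 / 2) = -1 := by
      rw [← map_ofNat C 2, ← C_mul]
      norm_num
    rw [hWW]
    linear_combination (pencilPoly A b b + 1) * htwo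
  refine hasLowdimCertificate_of_trace_eq hℓ hdegℓ (P := p • V + ℓ • W) (fun j a => ?_)
    (trace_smul_add_smul_of_isotropic (isSymm_pencilPoly hsymm) hVV hVW hp)
  refine (totalDegree_add _ _).trans (max_le ?_ ?_)
  · exact (totalDegree_mul _ _).trans (by simpa [V] using hdegp)
  · by_cases h : i = j ∧ b = a <;> simp [W, h, hdegℓ]

theorem eval_trace_pencilPoly_mul_nonneg {S : Matrix (Fin m) (Fin m) (MvPolynomial (Fin n) ℝ)}
    (hS : IsSosMatrix S) {x : Fin n → ℝ} (hx : x ∈ specSet A) :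
    0 ≤ eval x (pencilPoly A * S).trace := by
  obtain ⟨s, P, rfl⟩ := hS
  have hpsd : (pencilEval A x).PosSemidef := hx
  have htrace : eval x (pencilPoly A * (Pᵀ * P)).trace =
      (P.map (eval x) * pencilEval A x * (P.map (eval x))ᴴ).trace := by
    rw [AddMonoidHom.map_trace, Matrix.map_mul, Matrix.map_mul, map_eval_pencilPoly,
      ← Matrix.mul_assoc, trace_mul_comm, ← Matrix.mul_assoc,
      conjTranspose_eq_transpose_of_trivial, transpose_map]
  rw [htrace]
  exact (hpsd.mul_mul_conjTranspose_same _).trace_nonneg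

theorem interior_specSet_eq_empty_of_hasLowdimCertificate (h : HasLowdimCertificate A) :
    interior (specSet A) = ∅ := by
  obtain ⟨ℓ, hℓ, -, S, hS, -, htrace⟩ := h
  by_contra! hne
  refine hℓ (eq_zero_of_eval_eq_zero_of_interior_nonempty hne fun x hx => ?_)
  have hnonneg := eval_trace_pencilPoly_mul_nonneg hS hx
  rw [← htrace, map_neg, map_pow] at hnonneg
  exact pow_eq_zero_iff two_ne_zero |>.mp (le_antisymm (by linarith) (sq_nonneg _))

theorem iInf_ker_le_ker_pencilEval (x : Fin n → ℝ) :
    ⨅ k, LinearMap.ker (A k).mulVecLin ≤ LinearMap.ker (pencilEval A x).mulVecLin := by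
  intro v hv
  have hv : ∀ k, A k *ᵥ v = 0 := by simpa using hv
  rw [LinearMap.mem_ker, mulVecLin_apply, pencilEval, add_mulVec, Matrix.sum_mulVec]
  simp [smul_mulVec, hv]

theorem interior_specSet_nonempty (hsymm : ∀ k, (A k).IsSymm) {W : Submodule ℝ (Fin m → ℝ)}
    (hW : Codisjoint W (⨅ k, LinearMap.ker (A k).mulVecLin)) {x : Fin n → ℝ}
    (hx : ∀ w : W, w ≠ 0 → 0 < w.1 ⬝ᵥ pencilEval A x *ᵥ w.1) :
    (interior (specSet A)).Nonempty := by
  have hopen : IsOpen {y | ∀ w : W, w ≠ 0 → 0 < w.1 ⬝ᵥ pencilEval A y *ᵥ w.1} := by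
    refine isOpen_setOf_forall_ne_zero_pos ?_ fun y t w => ?_
    · have := continuous_pencilEval (A := A)
      fun_prop
    · rw [Submodule.coe_smul, mulVec_smul, smul_dotProduct, dotProduct_smul, smul_smul, sq,
        smul_eq_mul]
  refine ⟨x, mem_interior.mpr ⟨_, fun y hy => ?_, hopen, hx⟩⟩
  refine posSemidef_of_codisjoint_ker (isSymm_pencilEval hsymm y)
    (hW.mono_right (iInf_ker_le_ker_pencilEval y)) fun w hw => ?_
  rcases eq_or_ne w 0 with rfl | hw0
  · simp
  · exact (hy ⟨w, hw⟩ (by simpa using hw0)).le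

theorem dual_dotProduct_mulVec_eq (f : Module.Dual ℝ (Fin (n + 1) → ℝ))
    (hf : f (Pi.single 0 1) ≠ 0) (u v : Fin m → ℝ) :
    f (fun k => u ⬝ᵥ A k *ᵥ v) = f (Pi.single 0 1) *
      (u ⬝ᵥ pencilEval A (fun i => f (Pi.single i.succ 1) / f (Pi.single 0 1)) *ᵥ v) := by
  rw [pi_eq_sum_univ' fun k => u ⬝ᵥ A k *ᵥ v, map_sum, Fin.sum_univ_succ,
    dotProduct_pencilEval_mulVec, mul_add, Finset.mul_sum]
  simp only [map_smul, smul_eq_mul]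
  refine congrArg₂ _ (mul_comm _ _) (Finset.sum_congr rfl fun i _ => ?_)
  rw [← mul_assoc, mul_div_cancel₀ _ hf, mul_comm]

theorem exists_pos_or_exists_trace_eq (A : Fin (n + 1) → Matrix (Fin m) (Fin m) ℝ)
    (W : Submodule ℝ (Fin m → ℝ)) :
    (∃ x, ∀ w : W, w ≠ 0 → 0 < w.1 ⬝ᵥ pencilEval A x *ᵥ w.1) ∨
      ∃ (σ : Type) (_ : Fintype σ) (U : Matrix σ (Fin m) ℝ) (μ : ℝ), (∀ i, U i ∈ W) ∧
        (∀ k, (U * A k * Uᵀ).trace = (Pi.single 0 (-μ) : Fin (n + 1) → ℝ) k) ∧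
        (0 < μ ∨ μ = 0 ∧ U ≠ 0) := by
  let φ (p : W × ℝ) : Fin (n + 1) → ℝ :=
    (fun k => p.1.1 ⬝ᵥ A k *ᵥ p.1.1) + p.2 ^ 2 • Pi.single 0 1
  have hφ (t : ℝ) (p : W × ℝ) : φ (t • p) = t ^ 2 • φ p := by
    ext k
    simp only [φ, Prod.smul_fst, Prod.smul_snd, Submodule.coe_smul, mulVec_smul, smul_dotProduct,
      dotProduct_smul, Pi.add_apply, Pi.smul_apply, smul_eq_mul]
    ring
  have hcont : Continuous φ := by
    refine .add (continuous_pi fun k => ?_) ?_ <;> fun_prop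
  rcases exists_forall_ne_zero_pos_or_exists_sum_eq_zero hcont hφ with
    ⟨f, hf⟩ | ⟨σ, _, p, hp, hsum⟩
  · have hf0 : 0 < f (Pi.single 0 1) := by simpa [φ, ← Pi.zero_def] using hf (0, 1) (by simp)
    refine .inl ⟨_, fun w hw => pos_of_mul_pos_right (lt_of_lt_of_eq ?_
      (dual_dotProduct_mulVec_eq f.toLinearMap hf0.ne' w.1 w.1)) hf0.le⟩
    simpa [φ] using hf (w, 0) (by simpa using hw)
  · let U : Matrix σ (Fin m) ℝ := Matrix.of fun i => (p i).1.1
    let μ := ∑ i, (p i).2 ^ 2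
    have htrace (k) : (U * A k * Uᵀ).trace = (Pi.single 0 (-μ) : Fin (n + 1) → ℝ) k := by
      have h : (∑ i, (p i).1.1 ⬝ᵥ A k *ᵥ (p i).1.1) +
          μ * (Pi.single 0 1 : Fin (n + 1) → ℝ) k = 0 := by
        simpa [μ, φ, Finset.sum_add_distrib, ← Finset.sum_mul] using congrFun hsum k
      refine (trace_mul_mul_transpose_eq_sum U (A k)).trans
        ((eq_neg_of_add_eq_zero_left h).trans ?_)
      rw [Pi.single_neg, Pi.neg_apply, neg_inj]
      simp [Pi.single_apply]
    have hμ : 0 ≤ μ := Finset.sum_nonneg fun i _ => sq_nonneg _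
    refine .inr ⟨σ, inferInstance, U, μ, fun i => (p i).1.2, htrace,
      hμ.lt_or_eq.imp_right fun h => ⟨h.symm, fun hU => hp ?_⟩⟩
    have hτ := (Finset.sum_eq_zero_iff_of_nonneg fun i _ => sq_nonneg _).mp h.symm
    funext i
    exact Prod.ext (Subtype.ext (congrFun hU i)) (by simpa using hτ i (Finset.mem_univ i))

end Pencils

/-- **Certificates for low-dimensionality of spectrahedra.** For a linear pencil `L`,
the spectrahedron `S_L` has empty interior if and only if there exist a nonzero linear
polynomial `ℓ` and a quadratic sos-matrix `S` with `-ℓ² = tr(L S)`. -/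
theorem interior_empty_iff_exists_lowdim_certificate
    (n m : ℕ) (A : Fin (n+1) → Matrix (Fin m) (Fin m) ℝ)
    (hsymm : ∀ i, (A i).IsSymm) :
    interior (specSet A) = ∅ ↔
      ∃ ℓ : MvPolynomial (Fin n) ℝ, ℓ ≠ 0 ∧ ℓ.totalDegree ≤ 1 ∧
        ∃ S : Matrix (Fin m) (Fin m) (MvPolynomial (Fin n) ℝ),
          IsSosMatrix S ∧ (∀ a b, (S a b).totalDegree ≤ 2) ∧
          -ℓ^2 = (pencilPoly A * S).trace := by
  obtain ⟨W, hW⟩ := Submodule.exists_isCompl (⨅ k, LinearMap.ker (A k).mulVecLin)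
  refine ⟨fun hempty => ?_, interior_specSet_eq_empty_of_hasLowdimCertificate⟩
  rcases exists_pos_or_exists_trace_eq A W with ⟨x, hx⟩ | ⟨σ, _, U, μ, hUW, htrace, hμ⟩
  · exact absurd hempty (interior_specSet_nonempty hsymm hW.symm.codisjoint hx).ne_empty
  rcases hμ with hμ | ⟨rfl, hU⟩
  · exact hasLowdimCertificate_of_trace_eq_neg hμ htrace
  · obtain ⟨k, hk⟩ := exists_mul_ne_zero_of_disjoint_ker hsymm hW.symm.disjoint hUW hU
    exact hasLowdimCertificate_of_isotropic hsymm (by simpa using htrace) hk
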